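/- Let W be a Weyl candidate on Minkowski space V, n a unit timelike vector, E = E(W) and B = B(W) its electric and magnetic parts, ε the spatial volume form, and l_{μν} := η_{μν} + 2 n_μ n_ν (components with respect to the standard basis, n_μ = η(n,e_μ)). Then W is reconstructed from E and B by the identity W_{μνλσ} = 2( l_{μ[λ} E_{σ]ν} − l_{ν[λ} E_{σ]μ} − n_{[λ} B_{σ]τ} ε^{τ}_{ μν} − n_{[μ} B_{ν]τ} ε^{τ}_{ λσ} ), where square brackets denote antisymmetrization with weight ½ and indices are raised with η. -/

import Mathlib

noncomputable section

/-- Minkowski space `V = ℝ⁴`. -/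
abbrev V4 : Type := Fin 4 → ℝ

/-- The Minkowski bilinear form of signature `(-,+,+,+)`. -/
def η (x y : V4) : ℝ := -(x 0 * y 0) + x 1 * y 1 + x 2 * y 2 + x 3 * y 3

/-- The standard basis of `V4`. -/
def e4 (a : Fin 4) : V4 := Pi.single a 1

/-- Components of the Minkowski metric `diag(-1,1,1,1)` (its own inverse). -/
def ηm (a b : Fin 4) : ℝ := if a = b then (if a = (0 : Fin 4) then -1 else 1) else 0

/-- A 4-linear form on `V4`, given by its components in the standard basis. -/
abbrev T4 : Type := Fin 4 → Fin 4 → Fin 4 → Fin 4 → ℝ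

/-- A bilinear form on `V4`, given by its components in the standard basis. -/
abbrev T2 : Type := Fin 4 → Fin 4 → ℝ

/-- Evaluation of a 4-linear form (given by components) on vectors. -/
def eval4 (W : T4) (x y z w : V4) : ℝ :=
  ∑ a : Fin 4, ∑ b : Fin 4, ∑ c : Fin 4, ∑ d : Fin 4, W a b c d * x a * y b * z c * w d

/-- The alternating volume 4-form with `vol(e₀,e₁,e₂,e₃) = 1`. -/
def volv (x y z w : V4) : ℝ := Matrix.det (Matrix.of ![x, y, z, w])

/-- Components `η_{αβγδ}` of the volume form. -/
def volc (a b c d : Fin 4) : ℝ := volv (e4 a) (e4 b) (e4 c) (e4 d)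

/-- Left dual `(*W)_{μνλρ} = ½ η_{μν}{}^{αβ} W_{αβλρ}`. -/
def leftDual (W : T4) : T4 := fun μ ν lam ρ =>
  (1/2) * ∑ γ : Fin 4, ∑ δ : Fin 4, ∑ a : Fin 4, ∑ b : Fin 4,
    volc μ ν γ δ * ηm γ a * ηm δ b * W a b lam ρ

/-- Right dual `(W*)_{μνλρ} = ½ W_{μν}{}^{αβ} η_{αβλρ}`. -/
def rightDual (W : T4) : T4 := fun μ ν lam ρ =>
  (1/2) * ∑ γ : Fin 4, ∑ δ : Fin 4, ∑ a : Fin 4, ∑ b : Fin 4,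
    W μ ν a b * ηm a γ * ηm b δ * volc γ δ lam ρ

/-- A Weyl candidate: pair antisymmetries, pair exchange, first Bianchi, trace-free. -/
def IsWeyl (W : T4) : Prop :=
  (∀ x y z w : V4, eval4 W x y z w = - eval4 W y x z w) ∧
  (∀ x y z w : V4, eval4 W x y z w = - eval4 W x y w z) ∧
  (∀ x y z w : V4, eval4 W x y z w = eval4 W z w x y) ∧
  (∀ x y z w : V4, eval4 W x y z w + eval4 W x z w y + eval4 W x w y z = 0) ∧
  (∀ x y : V4, ∑ a : Fin 4, ∑ b : Fin 4, ηm a b * eval4 W (e4 a) x (e4 b) y = 0)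

/-- Electric part `E(W)_{ab} = W(e_a, n, e_b, n)`. -/
def Epart (W : T4) (n : V4) : T2 := fun a b => eval4 W (e4 a) n (e4 b) n

/-- Magnetic part `B(W)_{ab} = (W*)(e_a, n, e_b, n)`. -/
def Bpart (W : T4) (n : V4) : T2 := fun a b => eval4 (rightDual W) (e4 a) n (e4 b) n

/-- Raise both indices of a bilinear form's components. -/
def up2 (S : T2) : T2 := fun a b => ∑ c : Fin 4, ∑ d : Fin 4, ηm a c * ηm b d * S c d

/-- Full contraction `S_{ab} T^{ab}`. -/
def contr2 (S T : T2) : ℝ := ∑ a : Fin 4, ∑ b : Fin 4, S a b * up2 T a b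

/-! For a 2-form `F` one has `⟨n, n⟩ F = F(·, n) ∧ n + ⋆(n ∧ (⋆F)(·, n))`, so if `n` is not null
then `F` is recovered from its contraction with `n` and that of its Hodge dual. Trace-freeness of
`W` says that the left dual satisfies the Bianchi identity; it is therefore symmetric under exchange
of pairs, so the left and right duals of `W` agree and the double dual `*W*` is `-W`. Decomposing
`W` in both pairs of indices thus produces `E` and `B` in the mixed blocks, and `E` between two
spatial volume forms in the remaining one. This last term reduces to `E` itself because `E` is
symmetric, trace-free and kills `n`. -/

open Matrix Finset

lemma sum_mulVec_mul_det_updateRow {ι R : Type*} [Fintype ι] [DecidableEq ι] [CommRing R]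
    (A M : Matrix ι ι R) :
    ∑ i, ∑ τ, (A *ᵥ M i) τ * (M.updateRow i (Pi.single τ 1)).det = A.trace * M.det := by
  calc ∑ i, ∑ τ, (A *ᵥ M i) τ * (M.updateRow i (Pi.single τ 1)).det
      = ((A * Mᵀ) * (M.adjugate)ᵀ).trace := by
        rw [sum_comm]
        simp only [← adjugate_apply, Matrix.trace, diag_apply, mul_apply, mulVec, dotProduct,
          transpose_apply]
    _ = A.trace * M.det := by
        rw [Matrix.mul_assoc, ← transpose_mul, adjugate_mul, transpose_smul, transpose_one,
          Matrix.mul_smul, Matrix.mul_one, trace_smul, smul_eq_mul, mul_comm]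

section Volume

lemma volv_eq (x y z w : V4) : volv x y z w =
    (x 0 * y 1 - x 1 * y 0) * (z 2 * w 3 - z 3 * w 2)
    - (x 0 * y 2 - x 2 * y 0) * (z 1 * w 3 - z 3 * w 1)
    + (x 0 * y 3 - x 3 * y 0) * (z 1 * w 2 - z 2 * w 1)
    + (x 1 * y 2 - x 2 * y 1) * (z 0 * w 3 - z 3 * w 0)
    - (x 1 * y 3 - x 3 * y 1) * (z 0 * w 2 - z 2 * w 0)
    + (x 2 * y 3 - x 3 * y 2) * (z 0 * w 1 - z 1 * w 0) := by
  simp [volv, det_succ_row_zero, Fin.sum_univ_succ, Fin.succAbove]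
  ring

lemma sum_mulVec_mul_volv (A : Matrix (Fin 4) (Fin 4) ℝ) (x y z w : V4) :
    ∑ τ, (A *ᵥ x) τ * volv (e4 τ) y z w + ∑ τ, (A *ᵥ y) τ * volv x (e4 τ) z w +
      ∑ τ, (A *ᵥ z) τ * volv x y (e4 τ) w + ∑ τ, (A *ᵥ w) τ * volv x y z (e4 τ) =
      A.trace * volv x y z w := by
  have replace_row (v : V4) :
      (of ![x, y, z, w]).updateRow 0 v = of ![v, y, z, w] ∧
      (of ![x, y, z, w]).updateRow 1 v = of ![x, v, z, w] ∧
      (of ![x, y, z, w]).updateRow 2 v = of ![x, y, v, w] ∧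
      (of ![x, y, z, w]).updateRow 3 v = of ![x, y, z, v] := by
    refine ⟨?_, ?_, ?_, ?_⟩ <;> ext i <;> fin_cases i <;> rfl
  have h := sum_mulVec_mul_det_updateRow A (of ![x, y, z, w])
  rw [Fin.sum_univ_four] at h
  simp only [replace_row] at h
  exact h

lemma volv_swap_left (x y z w : V4) : volv x y z w = -volv y x z w := by
  simp only [volv_eq]
  ring

lemma volv_swap_right (x y z w : V4) : volv x y z w = -volv x y w z := by
  simp only [volv_eq]
  ring

lemma volv_eq_sum_snd (x n z w : V4) : volv x n z w = ∑ c, volv x (e4 c) z w * n c := by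
  simp only [volv_eq, Fin.sum_univ_four, e4, Pi.single_apply, Fin.isValue, Fin.reduceEq, reduceIte]
  ring

lemma volc_swap_left (a b c d : Fin 4) : volc a b c d = -volc b a c d :=
  volv_swap_left _ _ _ _

lemma volc_rotate (a b c d : Fin 4) : volc a b c d = volc b c a d := by
  simp only [volc, volv_eq]
  ring

lemma volc_pair_swap (a b c d : Fin 4) : volc a b c d = volc c d a b := by
  simp only [volc, volv_eq]
  ring

end Volume

section Metric

lemma η_comm (x y : V4) : η x y = η y x := by
  simp only [η]
  ring

lemma ηm_comm (a b : Fin 4) : ηm a b = ηm b a := by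
  simp only [ηm]
  grind

lemma ηm_mul_self (a : Fin 4) : ηm a a * ηm a a = 1 := by
  fin_cases a <;> simp [ηm]

lemma sum_ηm_mul (f : Fin 4 → ℝ) (a : Fin 4) : ∑ c, ηm c a * f c = ηm a a * f a := by
  simp [ηm]

lemma η_e4 (n : V4) (a : Fin 4) : η n (e4 a) = ηm a a * n a := by
  fin_cases a <;> simp [η, e4, ηm]

lemma η_e4_e4 (a b : Fin 4) : η (e4 a) (e4 b) = ηm a b := by
  fin_cases a <;> fin_cases b <;> simp [η, e4, ηm]

lemma up2_apply (S : T2) (a b : Fin 4) : up2 S a b = ηm a a * ηm b b * S a b := by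
  simp [up2, ηm]

/-- The Gram determinant `⟨x ∧ y ∧ z, u ∧ v ∧ w⟩` of two triples of vectors. -/
def gramDet (x y z u v w : V4) : ℝ :=
  det !![η x u, η x v, η x w; η y u, η y v, η y w; η z u, η z v, η z w]

lemma gramDet_eq (x y z u v w : V4) :
    gramDet x y z u v w =
      η x u * (η y v * η z w - η z v * η y w) + η y u * (η z v * η x w - η x v * η z w) +
        η z u * (η x v * η y w - η y v * η x w) := by
  simp only [gramDet, det_fin_three, of_apply, cons_val', cons_val_zero, cons_val_fin_one,
    cons_val_one, Matrix.cons_val]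
  ring

lemma sum_volv_mul_volv (n x y z w : V4) :
    ∑ τ, ηm τ τ * volv n (e4 τ) x y * volv n (e4 τ) z w = -gramDet n x y n z w := by
  simp only [gramDet_eq, volv_eq, η, Fin.sum_univ_four, e4, ηm, Pi.single_apply, Fin.isValue,
    Fin.reduceEq, reduceIte]
  ring

end Metric

lemma sum_sum_mul_mul_antisymm {ι R : Type*} [Fintype ι] [CommRing R] {F : ι → ι → R}
    (hF : ∀ a b, F a b = -F b a) (u v : ι → R) :
    ∑ a, ∑ b, F a b * u a * v b = -∑ a, ∑ b, F a b * v a * u b := by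
  rw [sum_comm]
  simp only [← sum_neg_distrib]
  exact sum_congr rfl fun a _ ↦ sum_congr rfl fun b _ ↦ by rw [hF]; ring

section TwoForm

/-- The Hodge dual `(⋆F)_{μν} = ½ η_{μν}{}^{γδ} F_{γδ}` of a 2-form. The left and right duals of a
4-linear form are the Hodge dual in its first and last pair of indices. -/
def hodge (F : T2) : T2 := fun μ ν ↦ 1 / 2 * ∑ γ, ∑ δ, volc μ ν γ δ * up2 F γ δ

lemma hodge_hodge {F : T2} (hF : ∀ a b, F a b = -F b a) (a b : Fin 4) :
    hodge (hodge F) a b = -F a b := by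
  fin_cases a <;> fin_cases b <;>
    simp [hodge, up2_apply, Fin.sum_univ_four, volc, volv_eq, e4, ηm] <;>
    linarith [hF 0 0, hF 1 1, hF 2 2, hF 3 3, hF 0 1, hF 0 2, hF 0 3, hF 1 2, hF 1 3, hF 2 3]

lemma sum_hodge_mul (F : T2) (n : V4) (a : Fin 4) :
    ∑ c, hodge F a c * n c =
      -(1 / 2) * ∑ γ, ∑ δ, up2 F γ δ * volv n (e4 a) (e4 γ) (e4 δ) := by
  simp only [volv_swap_left n, volv_eq_sum_snd _ n, hodge, volc, mul_sum, sum_mul,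
    ← sum_neg_distrib]
  rw [sum_comm]
  refine sum_congr rfl fun γ _ ↦ ?_
  rw [sum_comm]
  exact sum_congr rfl fun δ _ ↦ sum_congr rfl fun c _ ↦ by ring

lemma sum_up2_mul_η (F : T2) (x y : V4) :
    ∑ γ, ∑ δ, up2 F γ δ * (η x (e4 γ) * η y (e4 δ)) = ∑ a, ∑ b, F a b * x a * y b := by
  refine sum_congr rfl fun γ _ ↦ sum_congr rfl fun δ _ ↦ ?_
  rw [up2_apply, η_e4, η_e4]
  linear_combination F γ δ * x γ * y δ * (ηm_mul_self γ * ηm δ δ * ηm δ δ + ηm_mul_self δ)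

lemma sum_up2_mul_gramDet {F : T2} (hF : ∀ a b, F a b = -F b a) (x y z u : V4) :
    1 / 2 * ∑ γ, ∑ δ, up2 F γ δ * gramDet x y z u (e4 γ) (e4 δ) =
      η x u * ∑ a, ∑ b, F a b * y a * z b + η y u * ∑ a, ∑ b, F a b * z a * x b +
        η z u * ∑ a, ∑ b, F a b * x a * y b := by
  have laplace : ∑ γ, ∑ δ, up2 F γ δ * gramDet x y z u (e4 γ) (e4 δ) =
      η x u * ((∑ γ, ∑ δ, up2 F γ δ * (η y (e4 γ) * η z (e4 δ))) -
          ∑ γ, ∑ δ, up2 F γ δ * (η z (e4 γ) * η y (e4 δ))) +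
        η y u * ((∑ γ, ∑ δ, up2 F γ δ * (η z (e4 γ) * η x (e4 δ))) -
          ∑ γ, ∑ δ, up2 F γ δ * (η x (e4 γ) * η z (e4 δ))) +
        η z u * ((∑ γ, ∑ δ, up2 F γ δ * (η x (e4 γ) * η y (e4 δ))) -
          ∑ γ, ∑ δ, up2 F γ δ * (η y (e4 γ) * η x (e4 δ))) := by
    simp only [gramDet_eq, mul_sum, ← sum_add_distrib, ← sum_sub_distrib]
    exact sum_congr rfl fun γ _ ↦ sum_congr rfl fun δ _ ↦ by ring
  rw [laplace]
  simp only [sum_up2_mul_η]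
  rw [sum_sum_mul_mul_antisymm hF z y, sum_sum_mul_mul_antisymm hF x z,
    sum_sum_mul_mul_antisymm hF y x]
  ring

lemma sum_sum_hodge_mul_mul_volv (F : T2) (n x y : V4) :
    ∑ τ, ηm τ τ * (∑ c, hodge F τ c * n c) * volv n (e4 τ) x y =
      1 / 2 * ∑ γ, ∑ δ, up2 F γ δ * gramDet n x y n (e4 γ) (e4 δ) := by
  simp only [sum_hodge_mul, mul_sum, sum_mul]
  rw [sum_comm]
  refine sum_congr rfl fun γ _ ↦ ?_
  rw [sum_comm]
  refine sum_congr rfl fun δ _ ↦ ?_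
  rw [← neg_neg (gramDet ..), ← sum_volv_mul_volv, ← sum_neg_distrib, mul_sum, mul_sum]
  exact sum_congr rfl fun τ _ ↦ by ring

theorem η_mul_eq_electric_add_magnetic {F : T2} (hF : ∀ a b, F a b = -F b a) (n : V4)
    (a b : Fin 4) :
    η n n * F a b = (∑ c, F a c * n c) * η n (e4 b) - (∑ c, F b c * n c) * η n (e4 a) +
      ∑ τ, ηm τ τ * (∑ c, hodge F τ c * n c) * volv n (e4 τ) (e4 a) (e4 b) := by
  have swap_contraction : ∑ c, F c a * n c = -∑ c, F a c * n c := by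
    simp only [hF _ a, neg_mul, sum_neg_distrib]
  rw [sum_sum_hodge_mul_mul_volv, sum_up2_mul_gramDet hF]
  simp only [e4, Pi.single_apply, mul_ite, mul_one, mul_zero, ite_mul, zero_mul, sum_ite_irrel,
    sum_ite_eq', mem_univ, reduceIte, sum_const_zero, swap_contraction, η_comm _ n]
  ring

end TwoForm

section Dual

lemma leftDual_eq_hodge (W : T4) (μ ν lam ρ : Fin 4) :
    leftDual W μ ν lam ρ = hodge (fun a b ↦ W a b lam ρ) μ ν := by
  simp only [leftDual, hodge, up2, mul_sum, mul_assoc]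

lemma rightDual_eq_hodge (W : T4) (μ ν lam ρ : Fin 4) :
    rightDual W μ ν lam ρ = hodge (W μ ν) lam ρ := by
  simp only [rightDual, hodge, up2, mul_sum, volc_pair_swap lam ρ]
  refine sum_congr rfl fun γ _ ↦ sum_congr rfl fun δ _ ↦ sum_congr rfl fun a _ ↦
    sum_congr rfl fun b _ ↦ ?_
  rw [ηm_comm a, ηm_comm b]
  ring

lemma leftDual_apply (W : T4) (a b c d : Fin 4) :
    leftDual W a b c d = 1 / 2 * ∑ δ, ηm δ δ * ∑ γ, ηm γ γ * W γ δ c d * volc a b γ δ := by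
  rw [leftDual_eq_hodge, hodge, sum_comm]
  simp only [up2_apply, mul_sum]
  exact sum_congr rfl fun δ _ ↦ sum_congr rfl fun γ _ ↦ by ring

variable {W : T4}

lemma leftDual_eq_rightDual_pair_swap (pair : ∀ a b c d, W a b c d = W c d a b)
    (a b c d : Fin 4) : leftDual W a b c d = rightDual W c d a b := by
  simp only [leftDual_eq_hodge, rightDual_eq_hodge, pair _ _ c d]

lemma leftDual_leftDual (left : ∀ a b c d, W a b c d = -W b a c d) :
    leftDual (leftDual W) = -W := by
  ext a b c d
  simp only [leftDual_eq_hodge (leftDual W)]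
  simp only [leftDual_eq_hodge]
  exact hodge_hodge (left · · c d) a b

lemma leftDual_antisymm_left (W : T4) (a b c d : Fin 4) :
    leftDual W a b c d = -leftDual W b a c d := by
  simp only [leftDual_apply, volc_swap_left a b, mul_neg, sum_neg_distrib]

lemma leftDual_antisymm_right (right : ∀ a b c d, W a b c d = -W a b d c) (a b c d : Fin 4) :
    leftDual W a b c d = -leftDual W a b d c := by
  simp only [leftDual_apply, right _ _ c d, mul_neg, neg_mul, sum_neg_distrib]

lemma leftDual_bianchi (left : ∀ a b c d, W a b c d = -W b a c d)
    (trace : ∀ b d, ∑ a, ηm a a * W a b a d = 0) (a b c d : Fin 4) :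
    leftDual W a b c d + leftDual W b c a d + leftDual W c a b d = 0 := by
  have derivation (δ : Fin 4) :
      ∑ γ, ηm γ γ * W γ δ a d * volc b c γ δ + ∑ γ, ηm γ γ * W γ δ b d * volc c a γ δ +
        ∑ γ, ηm γ γ * W γ δ c d * volc a b γ δ + ∑ γ, ηm γ γ * W γ δ δ d * volc a b c γ = 0 := by
    have h := sum_mulVec_mul_volv (of fun γ x ↦ ηm γ γ * W γ δ x d) (e4 a) (e4 b) (e4 c) (e4 δ)
    simp only [← volc_rotate _ b c, volc_rotate c a]
    simpa [e4, volc, Matrix.trace, trace] using h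
  have mixed_trace : ∑ δ, ηm δ δ * ∑ γ, ηm γ γ * W γ δ δ d * volc a b c γ = 0 := by
    have factor : ∑ δ, ηm δ δ * ∑ γ, ηm γ γ * W γ δ δ d * volc a b c γ =
        -∑ γ, ηm γ γ * volc a b c γ * ∑ δ, ηm δ δ * W δ γ δ d := by
      simp only [mul_sum, ← sum_neg_distrib]
      rw [sum_comm]
      exact sum_congr rfl fun γ _ ↦ sum_congr rfl fun δ _ ↦ by rw [left γ δ]; ring
    simp only [factor, trace, mul_zero, sum_const_zero, neg_zero]
  have total := sum_congr rfl fun δ (_ : δ ∈ univ) ↦ congrArg (ηm δ δ * ·) (derivation δ)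
  simp only [mul_add, sum_add_distrib, mixed_trace, mul_zero, sum_const_zero] at total
  simp only [leftDual_apply]
  linear_combination 1 / 2 * total

lemma pair_symm_of_bianchi {ι R : Type*} [AddCommGroup R] [IsAddTorsionFree R]
    {Z : ι → ι → ι → ι → R}
    (left : ∀ a b c d, Z a b c d = -Z b a c d) (right : ∀ a b c d, Z a b c d = -Z a b d c)
    (bianchi : ∀ a b c d, Z a b c d + Z b c a d + Z c a b d = 0) (a b c d : ι) :
    Z a b c d = Z c d a b := by
  have octahedron : 2 • Z a b c d = 2 • Z c d a b := by
    have h₁ := bianchi a b c d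
    have h₂ := bianchi b c d a
    have h₃ := bianchi c d a b
    have h₄ := bianchi d a b c
    grind
  exact smul_right_injective R two_ne_zero octahedron

lemma leftDual_eq_rightDual (left : ∀ a b c d, W a b c d = -W b a c d)
    (pair : ∀ a b c d, W a b c d = W c d a b)
    (trace : ∀ b d, ∑ a, ηm a a * W a b a d = 0) : leftDual W = rightDual W := by
  have right (a b c d) : W a b c d = -W a b d c := by rw [pair, left, pair]
  ext a b c d
  rw [pair_symm_of_bianchi (leftDual_antisymm_left W) (leftDual_antisymm_right right)
    (leftDual_bianchi left trace), leftDual_eq_rightDual_pair_swap pair]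

end Dual

section Spatial

variable {S : T2} {n : V4}

lemma sum_volv_mul_sum_volv (hS : ∀ a b, S a b = S b a) (hn : ∀ a, ∑ b, S a b * n b = 0)
    (μ ν lam σ : Fin 4) :
    ∑ τ, ηm τ τ * volv n (e4 τ) (e4 μ) (e4 ν) *
        ∑ κ, ηm κ κ * S κ lam * volv n (e4 τ) (e4 κ) (e4 σ) =
      S ν lam * (η n n * ηm μ σ - η n (e4 μ) * η n (e4 σ)) -
        S μ lam * (η n n * ηm ν σ - η n (e4 ν) * η n (e4 σ)) := by
  have contract : ∑ τ, ηm τ τ * volv n (e4 τ) (e4 μ) (e4 ν) *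
      ∑ κ, ηm κ κ * S κ lam * volv n (e4 τ) (e4 κ) (e4 σ) =
      ∑ κ, S κ lam * (ηm κ κ * -gramDet n (e4 μ) (e4 ν) n (e4 κ) (e4 σ)) := by
    simp only [← sum_volv_mul_volv, mul_sum]
    rw [sum_comm]
    exact sum_congr rfl fun κ _ ↦ sum_congr rfl fun τ _ ↦ by ring
  have laplace (κ : Fin 4) : S κ lam * (ηm κ κ * -gramDet n (e4 μ) (e4 ν) n (e4 κ) (e4 σ)) =
      ηm κ ν * (ηm κ κ * S κ lam) * (η n n * ηm μ σ - η n (e4 μ) * η n (e4 σ)) -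
      ηm κ μ * (ηm κ κ * S κ lam) * (η n n * ηm ν σ - η n (e4 ν) * η n (e4 σ)) +
      S lam κ * n κ * (η n (e4 μ) * ηm ν σ - η n (e4 ν) * ηm μ σ) := by
    simp only [gramDet_eq, η_comm (e4 _) n, η_e4_e4]
    rw [η_e4 n κ, ηm_comm μ κ, ηm_comm ν κ, hS lam κ]
    linear_combination S κ lam * n κ * (η n (e4 μ) * ηm ν σ - η n (e4 ν) * ηm μ σ) * ηm_mul_self κ
  have lower (a : Fin 4) : ∑ κ, ηm κ a * (ηm κ κ * S κ lam) = S a lam := by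
    rw [sum_ηm_mul, ← mul_assoc, ηm_mul_self, one_mul]
  simp only [contract, laplace, sum_add_distrib, sum_sub_distrib, ← sum_mul, lower, hn, zero_mul,
    add_zero]

-- Since `S` kills `n` and is trace-free, its derivation action moves it from one slot of the
-- spatial volume form to the other two; the two volume forms then contract directly.
lemma sum_sum_volv_mul_volv (hS : ∀ a b, S a b = S b a) (hn : ∀ a, ∑ b, S a b * n b = 0)
    (trace : ∑ a, ηm a a * S a a = 0) (μ ν lam σ : Fin 4) :
    ∑ τ, ηm τ τ * volv n (e4 τ) (e4 μ) (e4 ν) *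
        ∑ κ, ηm κ κ * S κ τ * volv n (e4 κ) (e4 lam) (e4 σ) =
      (η n n * ηm μ lam - η n (e4 μ) * η n (e4 lam)) * S ν σ -
        (η n n * ηm μ σ - η n (e4 μ) * η n (e4 σ)) * S ν lam -
        (η n n * ηm ν lam - η n (e4 ν) * η n (e4 lam)) * S μ σ +
        (η n n * ηm ν σ - η n (e4 ν) * η n (e4 σ)) * S μ lam := by
  have derivation (τ : Fin 4) : ∑ κ, ηm κ κ * S κ τ * volv n (e4 κ) (e4 lam) (e4 σ) =
      (∑ κ, ηm κ κ * S κ σ * volv n (e4 τ) (e4 κ) (e4 lam)) -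
        ∑ κ, ηm κ κ * S κ lam * volv n (e4 τ) (e4 κ) (e4 σ) := by
    let A : Matrix (Fin 4) (Fin 4) ℝ := of fun κ τ ↦ ηm κ κ * S κ τ
    have annihilates (κ : Fin 4) : (A *ᵥ n) κ = 0 := by
      simp only [A, mulVec, dotProduct, of_apply, mul_assoc, ← mul_sum, hn, mul_zero]
    have column (κ b : Fin 4) : (A *ᵥ e4 b) κ = ηm κ κ * S κ b := by simp [A, e4]
    have trace_A : A.trace = 0 := trace
    have h := sum_mulVec_mul_volv A n (e4 τ) (e4 lam) (e4 σ)
    simp only [annihilates, column, trace_A, zero_mul, sum_const_zero, zero_add,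
      volv_swap_right n (e4 τ) (e4 lam), mul_neg, sum_neg_distrib] at h
    linear_combination h
  simp only [derivation, mul_sub, sum_sub_distrib, sum_volv_mul_sum_volv hS hn]
  ring

end Spatial

section ElectricMagnetic

variable {W : T4}

lemma Epart_eq (W : T4) (n : V4) (a c : Fin 4) :
    Epart W n a c = ∑ b, (∑ d, W a b c d * n d) * n b := by
  have slots : Epart W n a c = ∑ b, ∑ d, W a b c d * n b * n d := by
    simp [Epart, eval4, e4, Pi.single_apply]
  rw [slots]
  simp only [sum_mul]
  exact sum_congr rfl fun b _ ↦ sum_congr rfl fun d _ ↦ by ring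

lemma Bpart_eq_Epart_rightDual (W : T4) (n : V4) : Bpart W n = Epart (rightDual W) n := rfl

lemma Epart_neg (W : T4) (n : V4) (a b : Fin 4) : Epart (-W) n a b = -Epart W n a b := by
  simp only [Epart_eq, Pi.neg_apply, neg_mul, sum_neg_distrib]

lemma Epart_symm (pair : ∀ a b c d, W a b c d = W c d a b) (n : V4) (a b : Fin 4) :
    Epart W n a b = Epart W n b a := by
  simp only [Epart_eq, pair _ _ b, sum_mul]
  rw [sum_comm]
  exact sum_congr rfl fun c _ ↦ sum_congr rfl fun d _ ↦ by ring

lemma Bpart_symm (left : ∀ a b c d, W a b c d = -W b a c d)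
    (pair : ∀ a b c d, W a b c d = W c d a b)
    (trace : ∀ b d, ∑ a, ηm a a * W a b a d = 0) (n : V4) (a b : Fin 4) :
    Bpart W n a b = Bpart W n b a := by
  refine Epart_symm (fun a b c d ↦ ?_) n a b
  rw [← leftDual_eq_rightDual_pair_swap pair, leftDual_eq_rightDual left pair trace]

lemma sum_Epart_mul_self (right : ∀ a b c d, W a b c d = -W a b d c) (n : V4) (a : Fin 4) :
    ∑ c, Epart W n a c * n c = 0 := by
  have regroup : ∑ c, Epart W n a c * n c =
      ∑ b, (∑ c, ∑ d, W a b c d * n c * n d) * n b := by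
    simp only [Epart_eq, sum_mul]
    rw [sum_comm]
    exact sum_congr rfl fun b _ ↦ sum_congr rfl fun c _ ↦ sum_congr rfl fun d _ ↦ by ring
  have vanish (b : Fin 4) : ∑ c, ∑ d, W a b c d * n c * n d = 0 :=
    self_eq_neg.mp (sum_sum_mul_mul_antisymm (right a b) n n)
  simp only [regroup, vanish, zero_mul, sum_const_zero]

lemma sum_ηm_mul_Epart (trace : ∀ b d, ∑ a, ηm a a * W a b a d = 0) (n : V4) :
    ∑ a, ηm a a * Epart W n a a = 0 := by
  have regroup : ∑ a, ηm a a * Epart W n a a =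
      ∑ b, ∑ d, (∑ a, ηm a a * W a b a d) * n d * n b := by
    simp only [Epart_eq, mul_sum, sum_mul]
    rw [sum_comm]
    refine sum_congr rfl fun b _ ↦ ?_
    rw [sum_comm]
    exact sum_congr rfl fun d _ ↦ sum_congr rfl fun a _ ↦ by ring
  simp only [regroup, trace, zero_mul, sum_const_zero]

lemma hodge_sum_mul (W : T4) (n : V4) (a b c : Fin 4) :
    hodge (fun x y ↦ ∑ d, W x y c d * n d) a b = ∑ d, leftDual W a b c d * n d := by
  simp only [leftDual_eq_hodge, hodge, up2_apply, mul_sum, sum_mul, mul_assoc]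
  rw [sum_comm_cycle]

lemma η_mul_contract_eq (left : ∀ a b c d, W a b c d = -W b a c d) (n : V4) (a b c : Fin 4) :
    η n n * ∑ d, W a b c d * n d =
      Epart W n a c * η n (e4 b) - Epart W n b c * η n (e4 a) +
        ∑ τ, ηm τ τ * Epart (leftDual W) n τ c * volv n (e4 τ) (e4 a) (e4 b) := by
  have antisymm (x y : Fin 4) : ∑ d, W x y c d * n d = -∑ d, W y x c d * n d := by
    simp only [left x y, neg_mul, sum_neg_distrib]
  simpa only [Epart_eq, hodge_sum_mul] using η_mul_eq_electric_add_magnetic antisymm n a b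

lemma η_mul_contract_eq_Epart_Bpart (left : ∀ a b c d, W a b c d = -W b a c d)
    (pair : ∀ a b c d, W a b c d = W c d a b)
    (trace : ∀ b d, ∑ a, ηm a a * W a b a d = 0) (n : V4) (a b c : Fin 4) :
    η n n * ∑ d, W a b c d * n d =
      Epart W n a c * η n (e4 b) - Epart W n b c * η n (e4 a) +
        ∑ τ, ηm τ τ * Bpart W n c τ * volv n (e4 τ) (e4 a) (e4 b) := by
  have h := η_mul_contract_eq left n a b c
  rw [leftDual_eq_rightDual left pair trace, ← Bpart_eq_Epart_rightDual] at h
  simpa only [Bpart_symm left pair trace n c] using h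

lemma η_mul_contract_rightDual_eq (left : ∀ a b c d, W a b c d = -W b a c d)
    (pair : ∀ a b c d, W a b c d = W c d a b)
    (trace : ∀ b d, ∑ a, ηm a a * W a b a d = 0) (n : V4) (a b c : Fin 4) :
    η n n * ∑ d, rightDual W a b c d * n d =
      Bpart W n a c * η n (e4 b) - Bpart W n b c * η n (e4 a) -
        ∑ τ, ηm τ τ * Epart W n τ c * volv n (e4 τ) (e4 a) (e4 b) := by
  have h := η_mul_contract_eq (leftDual_antisymm_left W) n a b c
  rw [leftDual_leftDual left, leftDual_eq_rightDual left pair trace,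
    ← Bpart_eq_Epart_rightDual] at h
  simpa only [Epart_neg, mul_neg, neg_mul, sum_neg_distrib, ← sub_eq_add_neg] using h

lemma η_mul_sum_contract_rightDual_mul_volv (left : ∀ a b c d, W a b c d = -W b a c d)
    (pair : ∀ a b c d, W a b c d = W c d a b)
    (trace : ∀ b d, ∑ a, ηm a a * W a b a d = 0) (n : V4) (μ ν lam σ : Fin 4) :
    η n n * ∑ τ, ηm τ τ * (∑ c, rightDual W μ ν τ c * n c) * volv n (e4 τ) (e4 lam) (e4 σ) =
      -(∑ τ, (η n (e4 μ) * Bpart W n ν τ - η n (e4 ν) * Bpart W n μ τ) * ηm τ τ *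
          volv n (e4 τ) (e4 lam) (e4 σ)) -
        ((η n n * ηm μ lam - η n (e4 μ) * η n (e4 lam)) * Epart W n σ ν -
          (η n n * ηm μ σ - η n (e4 μ) * η n (e4 σ)) * Epart W n lam ν -
          (η n n * ηm ν lam - η n (e4 ν) * η n (e4 lam)) * Epart W n σ μ +
          (η n n * ηm ν σ - η n (e4 ν) * η n (e4 σ)) * Epart W n lam μ) := by
  have right (a b c d) : W a b c d = -W a b d c := by rw [pair, left, pair]
  have spatial := sum_sum_volv_mul_volv (Epart_symm pair n) (sum_Epart_mul_self right n)
    (sum_ηm_mul_Epart trace n) lam σ μ ν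
  have substitute : η n n * ∑ τ, ηm τ τ * (∑ c, rightDual W μ ν τ c * n c) *
      volv n (e4 τ) (e4 lam) (e4 σ) =
      -(∑ τ, (η n (e4 μ) * Bpart W n ν τ - η n (e4 ν) * Bpart W n μ τ) * ηm τ τ *
          volv n (e4 τ) (e4 lam) (e4 σ)) -
        ∑ τ, ηm τ τ * volv n (e4 τ) (e4 lam) (e4 σ) *
          ∑ κ, ηm κ κ * Epart W n κ τ * volv n (e4 κ) (e4 μ) (e4 ν) := by
    simp only [mul_sum (a := η n n), ← sum_neg_distrib, ← sum_sub_distrib]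
    refine sum_congr rfl fun τ _ ↦ ?_
    linear_combination ηm τ τ * volv n (e4 τ) (e4 lam) (e4 σ) *
      η_mul_contract_rightDual_eq left pair trace n μ ν τ
  rw [substitute, spatial, ηm_comm lam μ, ηm_comm lam ν, ηm_comm σ μ, ηm_comm σ ν]
  ring

end ElectricMagnetic

lemma eval4_e4 (W : T4) (a b c d : Fin 4) : eval4 W (e4 a) (e4 b) (e4 c) (e4 d) = W a b c d := by
  simp [eval4, e4, Pi.single_apply]

namespace IsWeyl

variable {W : T4}

lemma antisymm_left (hW : IsWeyl W) (a b c d : Fin 4) : W a b c d = -W b a c d := by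
  simpa only [eval4_e4] using hW.1 (e4 a) (e4 b) (e4 c) (e4 d)

lemma pair_symm (hW : IsWeyl W) (a b c d : Fin 4) : W a b c d = W c d a b := by
  simpa only [eval4_e4] using hW.2.2.1 (e4 a) (e4 b) (e4 c) (e4 d)

lemma sum_ηm_mul_eq_zero (hW : IsWeyl W) (b d : Fin 4) : ∑ a, ηm a a * W a b a d = 0 := by
  simpa [eval4_e4, ηm] using hW.2.2.2.2 (e4 b) (e4 d)

end IsWeyl

theorem stmt_10_general {W : T4} (left : ∀ a b c d, W a b c d = -W b a c d)
    (pair : ∀ a b c d, W a b c d = W c d a b)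
    (trace : ∀ b d, ∑ a, ηm a a * W a b a d = 0) {n : V4}
    {E B : T2} (hE : E = Epart W n) (hB : B = Bpart W n)
    {nl : Fin 4 → ℝ} (hnl : ∀ μ, nl μ = η n (e4 μ))
    {l : T2} (hl : ∀ μ ν, l μ ν = -η n n * ηm μ ν + 2 * nl μ * nl ν)
    {εc : Fin 4 → Fin 4 → Fin 4 → ℝ}
    (hεc : ∀ a b c, εc a b c = volv n (e4 a) (e4 b) (e4 c)) (μ ν lam σ : Fin 4) :
    η n n ^ 2 * W μ ν lam σ =
      2 * ((1/2) * (l μ lam * E σ ν - l μ σ * E lam ν)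
        - (1/2) * (l ν lam * E σ μ - l ν σ * E lam μ)
        - (1/2) * (∑ τ : Fin 4, ∑ τ' : Fin 4,
            (nl lam * B σ τ - nl σ * B lam τ) * ηm τ τ' * εc τ' μ ν)
        - (1/2) * (∑ τ : Fin 4, ∑ τ' : Fin 4,
            (nl μ * B ν τ - nl ν * B μ τ) * ηm τ τ' * εc τ' lam σ)) := by
  subst hE hB
  have right (a b c d) : W a b c d = -W a b d c := by rw [pair, left, pair]
  have second_pair := η_mul_eq_electric_add_magnetic (right μ ν) n lam σ
  simp only [← rightDual_eq_hodge] at second_pair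
  have electric := η_mul_contract_eq_Epart_Bpart left pair trace n μ ν
  have magnetic := η_mul_sum_contract_rightDual_mul_volv left pair trace n μ ν lam σ
  have distribute : ∑ τ, (η n (e4 lam) * Bpart W n σ τ - η n (e4 σ) * Bpart W n lam τ) * ηm τ τ *
        volv n (e4 τ) (e4 μ) (e4 ν) =
      η n (e4 lam) * ∑ τ, ηm τ τ * Bpart W n σ τ * volv n (e4 τ) (e4 μ) (e4 ν) -
        η n (e4 σ) * ∑ τ, ηm τ τ * Bpart W n lam τ * volv n (e4 τ) (e4 μ) (e4 ν) := by
    simp only [mul_sum, ← sum_sub_distrib]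
    exact sum_congr rfl fun τ _ ↦ by ring
  have raise (f g : Fin 4 → ℝ) : ∑ τ, ∑ τ', f τ * ηm τ τ' * g τ' = ∑ τ, f τ * ηm τ τ * g τ := by
    simp [ηm]
  simp only [hl, hnl, hεc, raise, distribute, Epart_symm pair n _ ν, Epart_symm pair n _ μ]
    at magnetic ⊢
  linear_combination η n n * second_pair + η n (e4 σ) * electric lam -
    η n (e4 lam) * electric σ + magnetic

/-- a Weyl candidate is reconstructed from its electric and magnetic parts. -/
theorem stmt_10 (W : T4) (hW : IsWeyl W) (n : V4) (hn : η n n = -1)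
    (E B : T2) (hE : E = Epart W n) (hB : B = Bpart W n)
    (nl : Fin 4 → ℝ) (hnl : ∀ μ, nl μ = η n (e4 μ))
    (l : T2) (hl : l = fun μ ν => ηm μ ν + 2 * nl μ * nl ν)
    (εc : Fin 4 → Fin 4 → Fin 4 → ℝ)
    (hεc : ∀ a b c, εc a b c = volv n (e4 a) (e4 b) (e4 c)) :
    ∀ μ ν lam σ, W μ ν lam σ =
      2 * ((1/2) * (l μ lam * E σ ν - l μ σ * E lam ν)
        - (1/2) * (l ν lam * E σ μ - l ν σ * E lam μ)
        - (1/2) * (∑ τ : Fin 4, ∑ τ' : Fin 4,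
            (nl lam * B σ τ - nl σ * B lam τ) * ηm τ τ' * εc τ' μ ν)
        - (1/2) * (∑ τ : Fin 4, ∑ τ' : Fin 4,
            (nl μ * B ν τ - nl ν * B μ τ) * ηm τ τ' * εc τ' lam σ)) := by
  intro μ ν lam σ
  simpa [hn] using stmt_10_general hW.antisymm_left hW.pair_symm hW.sum_ηm_mul_eq_zero hE hB hnl
    (by simp [hl, hn]) hεc μ ν lam σ
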